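/- Let x̃ ∈ L²(Ω, ℝᵐ) and ṽ_1, …, ṽ_p ∈ L²(Ω, ℝⁿ) be random vectors with E[x̃] = 0 and E[ṽ_k] = 0 for all k, with ṽ_1 = ỹ (the zero-mean observation), and with ṽ_1, …, ṽ_p pairwise uncorrelated: E[ṽ_i ṽ_jᵀ] = 0 for i ≠ j. Let T̄_{W,p}(ỹ) = Σ_{k=1}^p E_{x̃ ṽ_k} E_{ṽ_k ṽ_k}^† ṽ_k and let Ť(ỹ) = E_{x̃ ỹ} E_{ỹ ỹ}^† ỹ be the Wiener filter. Then E[‖x̃ − T̄_{W,p}(ỹ)‖²] = E[‖x̃ − Ť(ỹ)‖²] − Σ_{k=2}^p ‖E_{x̃ ṽ_k}(E_{ṽ_k ṽ_k}^{1/2})^†‖², where ‖·‖ on matrices is the Frobenius norm; in particular the error of T̄_{W,p} is no larger than that of the Wiener filter. -/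

import Mathlib

/-!
The vectors `f k = A k * P k * v k`, with `A k = E[x (v k)ᵀ]` and `P k` the pseudoinverse of
`R k = E[v k (v k)ᵀ]`, are pairwise orthogonal in `L²` because the `v k` are uncorrelated, so
the squared error of `x - ∑ k ∈ s, f k` is
`E‖x‖² + ∑ k ∈ s, (E‖f k‖² - 2 E⟨x, f k⟩)` for every finite set `s` of indices.
The pseudoinverse of a symmetric matrix is symmetric (`IsMP.symm_of_symm`), and `P R P = P`, so
each summand equals `-tr (A P Aᵀ)`. The pseudoinverse of the square of a symmetric matrix `S` is
the square of the pseudoinverse `Q` of `S` (`IsMP.sq`), so this is `-‖A Q‖²` (`sqFrob_eq`).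
Comparing `s = univ` with `s = {0}` gives the claim.
-/

open MeasureTheory Matrix BigOperators

noncomputable def vmean {Ω : Type*} [MeasurableSpace Ω] {n : ℕ} (μ : Measure Ω)
    (g : Ω → Fin n → ℝ) : Fin n → ℝ :=
  fun i => ∫ ω, g ω i ∂μ

/-- Cross-covariance matrix `𝔼_{gh} = E[g hᵀ] - E[g] E[h]ᵀ`. -/
noncomputable def cov {Ω : Type*} [MeasurableSpace Ω] {m n : ℕ} (μ : Measure Ω)
    (g : Ω → Fin m → ℝ) (h : Ω → Fin n → ℝ) : Matrix (Fin m) (Fin n) ℝ :=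
  Matrix.of fun i j => (∫ ω, g ω i * h ω j ∂μ) - (∫ ω, g ω i ∂μ) * (∫ ω, h ω j ∂μ)

/-- `g ∈ L²(Ω, ℝⁿ)`: measurable with `E[‖g‖²] < ∞`. -/
def MemL2 {Ω : Type*} [MeasurableSpace Ω] {n : ℕ} (μ : Measure Ω)
    (g : Ω → Fin n → ℝ) : Prop :=
  Measurable g ∧ Integrable (fun ω => ∑ i, (g ω i) ^ 2) μ

/-- `P` is the Moore–Penrose pseudoinverse of `M`. -/
def IsMP {m n : ℕ} (M : Matrix (Fin m) (Fin n) ℝ) (P : Matrix (Fin n) (Fin m) ℝ) : Prop :=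
  M * P * M = M ∧ P * M * P = P ∧ (M * P)ᵀ = M * P ∧ (P * M)ᵀ = P * M

/-- Squared Frobenius norm `‖M‖² = tr (M Mᵀ)`. -/
noncomputable def sqFrob {m n : ℕ} (M : Matrix (Fin m) (Fin n) ℝ) : ℝ :=
  Matrix.trace (M * Mᵀ)

/-- Raw (uncentered) second-moment matrix `E_{gh} = E[g hᵀ]` (for zero-mean vectors this
is the covariance matrix). -/
noncomputable def rcov {Ω : Type*} [MeasurableSpace Ω] {m n : ℕ} (μ : Measure Ω)
    (g : Ω → Fin m → ℝ) (h : Ω → Fin n → ℝ) : Matrix (Fin m) (Fin n) ℝ :=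
  Matrix.of fun i j => ∫ ω, g ω i * h ω j ∂μ

theorem IsMP.unique {m n : ℕ} {M : Matrix (Fin m) (Fin n) ℝ} {P P' : Matrix (Fin n) (Fin m) ℝ}
    (h : IsMP M P) (h' : IsMP M P') : P = P' := by
  obtain ⟨a, b, c, d⟩ := h
  -- Both pseudoinverses equal `P * M * P'`.
  obtain ⟨a', b', c', d'⟩ := h'
  have e1 : M * P' * (M * P) = M * P' := by
    calc M * P' * (M * P) = (M * P')ᵀ * (M * P)ᵀ := by rw [c, c']
      _ = (M * P * M * P')ᵀ := by rw [← transpose_mul]; simp only [Matrix.mul_assoc]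
      _ = M * P' := by rw [a, c']
  have e2 : P' * M * (P * M) = P * M := by
    calc P' * M * (P * M) = (P' * M)ᵀ * (P * M)ᵀ := by rw [d, d']
      _ = (P * (M * P' * M))ᵀ := by rw [← transpose_mul]; simp only [Matrix.mul_assoc]
      _ = P * M := by rw [a', d]
  calc P = P * (M * P' * M) * P := by rw [a', b]
    _ = P * (M * P' * (M * P)) := by simp only [Matrix.mul_assoc]
    _ = P * M * P' := by rw [e1, Matrix.mul_assoc]
    _ = P' * M * (P * M) * P' := by rw [e2]
    _ = P' * (M * P * M) * P' := by simp only [Matrix.mul_assoc]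
    _ = P' := by rw [a, b']

theorem IsMP.symm_of_symm {n : ℕ} {M P : Matrix (Fin n) (Fin n) ℝ}
    (h : IsMP M P) (hM : Mᵀ = M) : Pᵀ = P := by
  refine IsMP.unique (M := M) ?_ h
  obtain ⟨a, b, c, d⟩ := h
  have c2 : Pᵀ * M = M * P := by rw [← c, transpose_mul, hM]
  have d2 : M * Pᵀ = P * M := by rw [← d, transpose_mul, hM]
  refine ⟨?_, ?_, ?_, ?_⟩
  · have := congrArg transpose a
    simpa only [transpose_mul, hM, Matrix.mul_assoc] using this
  · have := congrArg transpose b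
    simpa only [transpose_mul, hM, Matrix.mul_assoc] using this
  · rw [d2, d]
  · rw [c2, c]

theorem IsMP.sq {n : ℕ} {S Q : Matrix (Fin n) (Fin n) ℝ}
    (h : IsMP S Q) (hS : Sᵀ = S) : IsMP (S * S) (Q * Q) := by
  have hQ := h.symm_of_symm hS
  obtain ⟨a, b, c, d⟩ := h
  -- A symmetric matrix commutes with its pseudoinverse.
  have hc : S * Q = Q * S := by
    have := c
    rw [transpose_mul, hS, hQ] at this
    exact this.symm
  have e1 : S * S * (Q * Q) = S * Q := by
    calc S * S * (Q * Q) = S * (S * Q) * Q := by simp only [Matrix.mul_assoc]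
      _ = S * (Q * S) * Q := by rw [← hc]
      _ = S * Q * S * Q := by simp only [Matrix.mul_assoc]
      _ = S * Q := by rw [a]
  have e2 : Q * Q * (S * S) = Q * S := by
    calc Q * Q * (S * S) = Q * (Q * S) * S := by simp only [Matrix.mul_assoc]
      _ = Q * (S * Q) * S := by rw [hc]
      _ = Q * S * Q * S := by simp only [Matrix.mul_assoc]
      _ = Q * S := by rw [b]
  refine ⟨?_, ?_, ?_, ?_⟩
  · rw [e1, ← Matrix.mul_assoc, a]
  · rw [e2, ← Matrix.mul_assoc, b]
  · rw [e1, c]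
  · rw [e2, d]

theorem sqFrob_eq {m n : ℕ} {A : Matrix (Fin m) (Fin n) ℝ} {R P S Q : Matrix (Fin n) (Fin n) ℝ}
    (hP : IsMP R P) (hS : Sᵀ = S) (hSR : S * S = R) (hQ : IsMP S Q) :
    sqFrob (A * Q) = trace (A * P * Aᵀ) := by
  have h1 : P = Q * Q := hP.unique (hSR ▸ hQ.sq hS)
  rw [sqFrob, transpose_mul, hQ.symm_of_symm hS, h1]
  simp only [Matrix.mul_assoc]

theorem sqFrob_nonneg {m n : ℕ} (M : Matrix (Fin m) (Fin n) ℝ) : 0 ≤ sqFrob M := by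
  simp only [sqFrob, trace, diag_apply, mul_apply, transpose_apply]
  exact Finset.sum_nonneg fun i _ => Finset.sum_nonneg fun j _ => mul_self_nonneg _

section Moments

variable {Ω : Type*} [MeasurableSpace Ω] {μ : Measure Ω}

theorem MemL2.memLp {n : ℕ} {g : Ω → Fin n → ℝ} (hg : MemL2 μ g) (i : Fin n) :
    MemLp (fun ω => g ω i) 2 μ := by
  have hm : Measurable fun ω => g ω i := (measurable_pi_apply i).comp hg.1
  rw [memLp_two_iff_integrable_sq hm.aestronglyMeasurable]
  refine hg.2.mono' (hm.pow_const 2).aestronglyMeasurable (ae_of_all _ fun ω => ?_)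
  rw [Real.norm_of_nonneg (sq_nonneg _)]
  exact Finset.single_le_sum (f := fun i => g ω i ^ 2) (fun j _ => sq_nonneg _)
    (Finset.mem_univ i)

theorem MemL2.memLp_mulVec {m n : ℕ} {g : Ω → Fin n → ℝ} (hg : MemL2 μ g)
    (W : Matrix (Fin m) (Fin n) ℝ) (i : Fin m) :
    MemLp (fun ω => W.mulVec (g ω) i) 2 μ := by
  simp only [mulVec, dotProduct]
  exact memLp_finsetSum _ fun j _ => (hg.memLp j).const_mul _

theorem integral_mulVec_mul {m n k l : ℕ} {g : Ω → Fin n → ℝ} {h : Ω → Fin k → ℝ}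
    (hg : MemL2 μ g) (hh : MemL2 μ h) (W : Matrix (Fin m) (Fin n) ℝ)
    (U : Matrix (Fin l) (Fin k) ℝ) (i : Fin m) (j : Fin l) :
    ∫ ω, W.mulVec (g ω) i * U.mulVec (h ω) j ∂μ = (W * rcov μ g h * Uᵀ) i j := by
  have hI : ∀ a b, Integrable (fun ω => W i a * g ω a * (U j b * h ω b)) μ := fun a b =>
    ((hg.memLp a).const_mul _).integrable_mul ((hh.memLp b).const_mul _)
  simp only [mulVec, dotProduct, Finset.sum_mul_sum]
  rw [integral_finsetSum _ fun a _ => integrable_finsetSum _ fun b _ => hI a b]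
  simp only [mul_apply, transpose_apply, rcov, of_apply, Finset.sum_mul]
  rw [Finset.sum_comm]
  refine Finset.sum_congr rfl fun a _ => ?_
  rw [integral_finsetSum _ fun b _ => hI a b]
  refine Finset.sum_congr rfl fun b _ => ?_
  rw [← integral_const_mul, ← integral_mul_const]
  exact integral_congr_ae (ae_of_all _ fun ω => by ring)

/-- Pythagorean expansion of the squared `L²` distance from `X` to a sum of pairwise orthogonal
random variables. -/
theorem integral_sub_sum_sq {ι : Type*} [DecidableEq ι] {X : Ω → ℝ} {f : ι → Ω → ℝ}
    (hX : MemLp X 2 μ) (hf : ∀ k, MemLp (f k) 2 μ)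
    (ho : ∀ k l, k ≠ l → ∫ ω, f k ω * f l ω ∂μ = 0) (s : Finset ι) :
    ∫ ω, (X ω - ∑ k ∈ s, f k ω) ^ 2 ∂μ
      = ∫ ω, X ω ^ 2 ∂μ + ∑ k ∈ s, (∫ ω, f k ω * f k ω ∂μ - 2 * ∫ ω, X ω * f k ω ∂μ) := by
  induction s using Finset.induction_on with
  | empty => simp
  | insert a s ha ih =>
    have hF : MemLp (fun ω => ∑ k ∈ s, f k ω) 2 μ := memLp_finsetSum _ fun k _ => hf k
    have h0 : ∫ ω, (∑ k ∈ s, f k ω) * f a ω ∂μ = 0 := by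
      simp only [Finset.sum_mul]
      have hI : ∀ k, Integrable (fun ω => f k ω * f a ω) μ :=
        fun k => (hf k).integrable_mul (hf a)
      rw [integral_finsetSum _ fun k _ => hI k]
      refine Finset.sum_eq_zero fun k hk => ho k a ?_
      rintro rfl
      exact ha hk
    have i1 : Integrable (fun ω => (X ω - ∑ k ∈ s, f k ω) ^ 2) μ := (hX.sub hF).integrable_sq
    have i2 : Integrable (fun ω => f a ω * f a ω) μ := (hf a).integrable_mul (hf a)
    have i3 : Integrable (fun ω => 2 * (X ω * f a ω)) μ :=
      (hX.integrable_mul (hf a)).const_mul 2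
    have i4 : Integrable (fun ω => 2 * ((∑ k ∈ s, f k ω) * f a ω)) μ :=
      (hF.integrable_mul (hf a)).const_mul 2
    have i5 : Integrable (fun ω => f a ω * f a ω - 2 * (X ω * f a ω)) μ := i2.sub i3
    have i6 : Integrable (fun ω => (X ω - ∑ k ∈ s, f k ω) ^ 2
        + (f a ω * f a ω - 2 * (X ω * f a ω))) μ := i1.add i5
    have e : ∀ ω, (X ω - ∑ k ∈ insert a s, f k ω) ^ 2
        = (X ω - ∑ k ∈ s, f k ω) ^ 2 + (f a ω * f a ω - 2 * (X ω * f a ω))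
          + 2 * ((∑ k ∈ s, f k ω) * f a ω) := fun ω => by
      rw [Finset.sum_insert ha]; ring
    simp only [e]
    rw [integral_add i6 i4, integral_add i1 i5, integral_sub i2 i3,
      integral_const_mul, integral_const_mul, h0, ih, Finset.sum_insert ha]
    ring

theorem rcov_transpose {m n : ℕ} (g : Ω → Fin m → ℝ) (h : Ω → Fin n → ℝ) :
    (rcov μ g h)ᵀ = rcov μ h g := by
  ext i j
  simp only [transpose_apply, rcov, of_apply, mul_comm]

/-- Squared error of the filter that uses only the components with index in `s`. -/
theorem error_eq {m n p : ℕ} {x : Ω → Fin m → ℝ} (hx : MemL2 μ x)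
    {v : Fin p → Ω → Fin n → ℝ} (hv : ∀ k, MemL2 μ (v k))
    (horth : ∀ i j, i ≠ j → rcov μ (v i) (v j) = 0)
    {P : Fin p → Matrix (Fin n) (Fin n) ℝ}
    (hP : ∀ k, IsMP (rcov μ (v k) (v k)) (P k)) (s : Finset (Fin p)) :
    ∫ ω, ∑ i, (x ω i - ∑ k ∈ s, (rcov μ x (v k) * P k).mulVec (v k ω) i) ^ 2 ∂μ
      = ∑ i, ∫ ω, x ω i ^ 2 ∂μ
        - ∑ k ∈ s, trace (rcov μ x (v k) * P k * (rcov μ x (v k))ᵀ) := by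
  have hf : ∀ k i, MemLp (fun ω => (rcov μ x (v k) * P k).mulVec (v k ω) i) 2 μ :=
    fun k i => (hv k).memLp_mulVec _ i
  have hFm : ∀ i, MemLp (fun ω => ∑ k ∈ s, (rcov μ x (v k) * P k).mulVec (v k ω) i) 2 μ :=
    fun i => memLp_finsetSum _ fun k _ => hf k i
  have hI : ∀ i, Integrable (fun ω =>
      (x ω i - ∑ k ∈ s, (rcov μ x (v k) * P k).mulVec (v k ω) i) ^ 2) μ :=
    fun i => ((hx.memLp i).sub (hFm i)).integrable_sq
  rw [integral_finsetSum _ fun i _ => hI i]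
  simp only [trace, diag_apply]
  rw [Finset.sum_comm, ← Finset.sum_sub_distrib]
  refine Finset.sum_congr rfl fun i _ => ?_
  rw [integral_sub_sum_sq (hx.memLp i) (fun k => hf k i) _ s, sub_eq_add_neg,
    ← Finset.sum_neg_distrib]
  · congr 1
    refine Finset.sum_congr rfl fun k _ => ?_
    have hPs : (P k)ᵀ = P k := (hP k).symm_of_symm (rcov_transpose _ _)
    have h1 := integral_mulVec_mul hx (hv k) 1 (rcov μ x (v k) * P k) i i
    simp only [one_mulVec, Matrix.one_mul] at h1
    have e1 : rcov μ x (v k) * (rcov μ x (v k) * P k)ᵀ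
        = rcov μ x (v k) * P k * (rcov μ x (v k))ᵀ := by
      rw [transpose_mul, hPs, Matrix.mul_assoc]
    have e2 : rcov μ x (v k) * P k * rcov μ (v k) (v k) * (rcov μ x (v k) * P k)ᵀ
        = rcov μ x (v k) * P k * (rcov μ x (v k))ᵀ := by
      conv_rhs => rw [← (hP k).2.1]
      rw [transpose_mul, hPs]
      simp only [Matrix.mul_assoc]
    rw [h1, integral_mulVec_mul (hv k) (hv k), e1, e2]
    ring
  · intro k l hkl
    rw [integral_mulVec_mul (hv k) (hv l), horth k l hkl]
    simp

end Moments


theorem better_than_wiener_filter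
    {Ω : Type*} [MeasurableSpace Ω] (μ : Measure Ω) [IsProbabilityMeasure μ]
    {m n p : ℕ} [NeZero p] (x : Ω → Fin m → ℝ) (hx : MemL2 μ x)
    (hx0 : vmean μ x = 0)
    (v : Fin p → Ω → Fin n → ℝ) (hv : ∀ k, MemL2 μ (v k))
    (hv0 : ∀ k, vmean μ (v k) = 0)
    (horth : ∀ i j, i ≠ j → rcov μ (v i) (v j) = 0)
    (P : Fin p → Matrix (Fin n) (Fin n) ℝ)
    (hP : ∀ k, IsMP (rcov μ (v k) (v k)) (P k))
    (S : Fin p → Matrix (Fin n) (Fin n) ℝ)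
    (hSpsd : ∀ k, (S k).PosSemidef)
    (hSsq : ∀ k, S k * S k = rcov μ (v k) (v k))
    (Q : Fin p → Matrix (Fin n) (Fin n) ℝ)
    (hQ : ∀ k, IsMP (S k) (Q k)) :
    (∫ ω, ∑ i, (x ω i - ∑ k, (rcov μ x (v k) * P k).mulVec (v k ω) i) ^ 2 ∂μ)
      = (∫ ω, ∑ i, (x ω i - (rcov μ x (v 0) * P 0).mulVec (v 0 ω) i) ^ 2 ∂μ)
        - ∑ k ∈ Finset.univ.filter (fun k : Fin p => k ≠ 0),
            sqFrob (rcov μ x (v k) * Q k) ∧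
    (∫ ω, ∑ i, (x ω i - ∑ k, (rcov μ x (v k) * P k).mulVec (v k ω) i) ^ 2 ∂μ)
      ≤ (∫ ω, ∑ i, (x ω i - (rcov μ x (v 0) * P 0).mulVec (v 0 ω) i) ^ 2 ∂μ) := by
  have hU := error_eq hx hv horth hP Finset.univ
  have h0 := error_eq hx hv horth hP {0}
  simp only [Finset.sum_singleton] at h0
  have hF : ∀ k, sqFrob (rcov μ x (v k) * Q k)
      = trace (rcov μ x (v k) * P k * (rcov μ x (v k))ᵀ) := fun k =>
    sqFrob_eq (hP k) (by simpa using (hSpsd k).isHermitian.eq) (hSsq k) (hQ k)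
  have hmain : (∫ ω, ∑ i, (x ω i - ∑ k, (rcov μ x (v k) * P k).mulVec (v k ω) i) ^ 2 ∂μ)
      = (∫ ω, ∑ i, (x ω i - (rcov μ x (v 0) * P 0).mulVec (v 0 ω) i) ^ 2 ∂μ)
        - ∑ k ∈ Finset.univ.filter (fun k : Fin p => k ≠ 0),
            sqFrob (rcov μ x (v k) * Q k) := by
    simp only [hF]
    rw [hU, h0, Finset.filter_ne',
      ← Finset.add_sum_erase Finset.univ _ (Finset.mem_univ (0 : Fin p))]
    ring
  refine ⟨hmain, ?_⟩
  rw [hmain]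
  exact sub_le_self _ (Finset.sum_nonneg fun k _ => sqFrob_nonneg _)
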